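/- Let n ≥ 2 and let Q be the set of pairs (μ_{i,j}, μ_{−j,−i}) for i < j in [±n], viewed as relations on the partition monoid of [±n]. If X is a subset of [±n] such that X ∩ (−X) ≠ ∅, then the pair (μ_X, μ_Y) lies in the congruence generated by Q, where Y := {−m} ∪ |X|, with |X| := {|x| : x ∈ X} (viewed as a subset of the positive elements of [±n]) and m := min |X|. -/

import Mathlib

instance setoidCommMonoid (α : Type*) : CommMonoid (Setoid α) where
  mul := (· ⊔ ·)
  one := ⊥
  mul_assoc := sup_assoc
  one_mul := bot_sup_eq
  mul_one := sup_bot_eq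
  mul_comm := sup_comm

def muSet {α : Type*} (X : Set α) : Setoid α :=
  Relation.EqvGen.setoid (fun x y => x ∈ X ∧ y ∈ X)

def mu {α : Type*} (i j : α) : Setoid α := muSet {i, j}

/-- `[±n]`: nonzero integers of absolute value at most `n`, with the order from `ℤ`. -/
abbrev PM (n : ℕ) := {k : ℤ // k ≠ 0 ∧ |k| ≤ (n : ℤ)}

namespace PM

/-- The negation involution `k ↦ -k` on `[±n]`. -/
def neg {n : ℕ} (x : PM n) : PM n :=
  ⟨-x.1, by obtain ⟨h1, h2⟩ := x.2; exact ⟨neg_ne_zero.mpr h1, by rwa [abs_neg]⟩⟩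

@[simp] theorem neg_neg {n : ℕ} (x : PM n) : x.neg.neg = x := Subtype.ext (by simp [neg])

theorem neg_lt_neg {n : ℕ} {x y : PM n} (h : x < y) : y.neg < x.neg := by
  have h' : x.1 < y.1 := Subtype.coe_lt_coe.mpr h
  rw [← Subtype.coe_lt_coe]
  show -y.1 < -x.1
  omega

theorem neg_lt_pos {n : ℕ} {x y : PM n} (hx : 0 < x.1) (hy : 0 < y.1) : x.neg < y := by
  rw [← Subtype.coe_lt_coe]
  show -x.1 < y.1
  omega

theorem pos_ne_neg {n : ℕ} {x y : PM n} (hx : 0 < x.1) (hy : 0 < y.1) : y ≠ x.neg := by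
  intro h
  have : y.1 = -x.1 := congrArg Subtype.val h
  omega

theorem neg_lt_self {n : ℕ} {x : PM n} (hx : 0 < x.1) : x.neg < x := neg_lt_pos hx hx

/-- The absolute value map `x ↦ |x|` from `[±n]` to its positive part. -/
def abs {n : ℕ} (x : PM n) : PM n :=
  ⟨|x.1|, by obtain ⟨h1, h2⟩ := x.2; exact ⟨abs_ne_zero.mpr h1, by rwa [abs_abs]⟩⟩

end PM

/-- Image of a subset of `[±n]` under negation. -/
def negSet {n : ℕ} (K : Set (PM n)) : Set (PM n) := PM.neg '' K

/-- The partition `I⁻` transported along negation: `x ∼ y` in `negPart I` iff `-x ∼ -y` in `I`. -/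
def negPart {n : ℕ} (I : Setoid (PM n)) : Setoid (PM n) := Setoid.comap PM.neg I

/-- A set partition `I` of `[±n]` is *signed* if for every block `K` of `I` the set `-K` is
also a block; equivalently, `x ∼ y ↔ -x ∼ -y` for all `x, y`. -/
def IsSigned {n : ℕ} (I : Setoid (PM n)) : Prop :=
  ∀ x y : PM n, I x y ↔ I (PM.neg x) (PM.neg y)

/-- A *zero block* of a partition `I` is a block `K` with `-K = K`. -/
def IsZeroBlock {n : ℕ} (I : Setoid (PM n)) (K : Set (PM n)) : Prop :=
  K ∈ I.classes ∧ negSet K = K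

/-- A `Bₙ`-partition: a signed partition of `[±n]` with at most one zero block. -/
def IsBPart {n : ℕ} (I : Setoid (PM n)) : Prop :=
  IsSigned I ∧ Set.Subsingleton {K | IsZeroBlock I K}

/-- A *restricted* signed partition: all its zero blocks have more than two elements. -/
def IsRestricted {n : ℕ} (I : Setoid (PM n)) : Prop :=
  IsSigned I ∧ ∀ K : Set (PM n), IsZeroBlock I K → 2 < K.ncard

/-- A `Dₙ`-partition: a `Bₙ`-partition whose zero block (if present) has more than two
elements. -/
def IsDPart {n : ℕ} (I : Setoid (PM n)) : Prop :=
  IsBPart I ∧ ∀ K : Set (PM n), IsZeroBlock I K → 2 < K.ncard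

/-- For `i < j` in `[±n]`, the signed partition `ε_{i,j} = μ_{-j,-i} ⊔ μ_{i,j}`. -/
def eps {n : ℕ} (i j : PM n) : Setoid (PM n) := mu (PM.neg j) (PM.neg i) ⊔ mu i j

/-- The set `Q` of pairs `(μ_{i,j}, μ_{-j,-i})` for `i < j` in `[±n]`, viewed as a binary
relation on the partition monoid of `[±n]`. -/
def QRel (n : ℕ) : Setoid (PM n) → Setoid (PM n) → Prop := fun a b =>
  ∃ i j : PM n, i < j ∧ a = mu i j ∧ b = mu (PM.neg j) (PM.neg i)

/-!
If `Z` contains `a`, `-a` and `b`, then joining `μ_Z` with `μ_{a,b}` changes nothing, whereas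
joining it with `μ_{-a,-b}` adds `-b` to the block. As the congruence identifies `μ_{a,b}` with
`μ_{-a,-b}`, it identifies `μ_Z` with `μ_{Z ∪ {-b}}`. Iterating over `b ∈ X` gives
`μ_X ∼ μ_{X ∪ -X}` whenever `X ∩ -X ≠ ∅`, and `X ∪ -X` depends only on `|X|`.
-/

section Partition

variable {α : Type*}

theorem muSet_le_iff {X : Set α} {s : Setoid α} :
    muSet X ≤ s ↔ ∀ x ∈ X, ∀ y ∈ X, s x y :=
  ⟨fun h x hx y hy => h (Relation.EqvGen.rel x y ⟨hx, hy⟩),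
    fun h => Setoid.eqvGen_le fun x y hxy => h x hxy.1 y hxy.2⟩

theorem muSet_rel {X : Set α} {x y : α} (hx : x ∈ X) (hy : y ∈ X) : muSet X x y :=
  muSet_le_iff.mp le_rfl x hx y hy

theorem muSet_mono {X Y : Set α} (h : X ⊆ Y) : muSet X ≤ muSet Y :=
  muSet_le_iff.mpr fun _ hx _ hy => muSet_rel (h hx) (h hy)

theorem mu_self (x : α) : mu x x = ⊥ :=
  le_bot_iff.mp <| muSet_le_iff.mpr <| by
    rintro _ (rfl | rfl) _ (rfl | rfl) <;> rfl

theorem mu_comm (x y : α) : mu x y = mu y x :=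
  congrArg muSet (Set.pair_comm x y)

theorem muSet_mul_muSet {X Y : Set α} (h : (X ∩ Y).Nonempty) :
    muSet X * muSet Y = muSet (X ∪ Y) := by
  obtain ⟨z, hzX, hzY⟩ := h
  change muSet X ⊔ muSet Y = muSet (X ∪ Y)
  have rel_z : ∀ x ∈ X ∪ Y, (muSet X ⊔ muSet Y) x z := by
    rintro x (hx | hx)
    · exact (le_sup_left : muSet X ≤ muSet X ⊔ muSet Y) (muSet_rel hx hzX)
    · exact (le_sup_right : muSet Y ≤ muSet X ⊔ muSet Y) (muSet_rel hx hzY)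
  apply le_antisymm
  · exact sup_le (muSet_mono Set.subset_union_left) (muSet_mono Set.subset_union_right)
  · exact muSet_le_iff.mpr fun x hx y hy =>
      Setoid.trans' _ (rel_z x hx) (Setoid.symm' _ (rel_z y hy))

theorem muSet_mul_mu {X : Set α} {x : α} (hx : x ∈ X) (y : α) :
    muSet X * mu x y = muSet (insert y X) := by
  rw [mu, muSet_mul_muSet ⟨x, hx, Set.mem_insert x {y}⟩, Set.union_insert, Set.union_singleton,
    Set.insert_eq_of_mem (Set.mem_insert_of_mem y hx)]

variable {c : Con (Setoid α)}

theorem con_muSet_insert {X : Set α} {a b a' b' : α} (h : c (mu a b) (mu a' b'))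
    (ha : a ∈ X) (hb : b ∈ X) (ha' : a' ∈ X) : c (muSet X) (muSet (insert b' X)) := by
  have hmul : c (muSet X * mu a b) (muSet X * mu a' b') := c.mul (c.refl _) h
  rwa [muSet_mul_mu ha, muSet_mul_mu ha', Set.insert_eq_of_mem hb] at hmul

theorem con_muSet_union_image {f : α → α} (h : ∀ x y, c (mu x y) (mu (f x) (f y)))
    {X S : Set α} {a : α} (ha : a ∈ X) (hfa : f a ∈ X) (hS : S.Finite) (hSX : S ⊆ X) :
    c (muSet X) (muSet (X ∪ f '' S)) := by
  induction S, hS using Set.Finite.induction_on with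
  | empty => simpa only [Set.image_empty, Set.union_empty] using c.refl (muSet X)
  | @insert b S _ _ ih =>
    obtain ⟨hb, hSX⟩ := Set.insert_subset_iff.mp hSX
    rw [Set.image_insert_eq, Set.union_insert]
    exact c.trans (ih hSX) (con_muSet_insert (h a b) (.inl ha) (.inl hb) (.inl hfa))

end Partition

section SignedIntegers

variable {n : ℕ}

instance PM.instFinite : Finite (PM n) :=
  ((Set.finite_Icc (-(n : ℤ)) n).subset fun _ hk => abs_le.mp hk.2).to_subtype

theorem PM.abs_eq_abs_iff {x y : PM n} : x.abs = y.abs ↔ x = y ∨ x = y.neg := by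
  simp only [Subtype.ext_iff, PM.abs, PM.neg, abs_eq_abs]

theorem PM.abs_neg (x : PM n) : x.neg.abs = x.abs :=
  PM.abs_eq_abs_iff.mpr (.inr rfl)

theorem PM.abs_abs (x : PM n) : x.abs.abs = x.abs :=
  Subtype.ext (_root_.abs_abs x.1)

theorem PM.preimage_image_abs (X : Set (PM n)) :
    PM.abs ⁻¹' (PM.abs '' X) = X ∪ negSet X := by
  ext x
  constructor
  · rintro ⟨y, hy, hyx⟩
    rcases PM.abs_eq_abs_iff.mp hyx.symm with rfl | rfl
    · exact .inl hy
    · exact .inr ⟨y, hy, rfl⟩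
  · rintro (hx | ⟨y, hy, rfl⟩)
    · exact ⟨x, hx, rfl⟩
    · exact ⟨y, hy, (PM.abs_neg y).symm⟩

theorem PM.image_abs_neg_union_image_abs {X : Set (PM n)} {m : PM n} (hm : m ∈ PM.abs '' X) :
    PM.abs '' ({PM.neg m} ∪ PM.abs '' X) = PM.abs '' X := by
  obtain ⟨x, hx, rfl⟩ := hm
  simp only [Set.image_union, Set.image_singleton, Set.image_image, PM.abs_neg, PM.abs_abs]
  exact Set.insert_eq_of_mem (Set.mem_image_of_mem PM.abs hx)

theorem conGen_QRel_mu_neg (x y : PM n) :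
    conGen (QRel n) (mu x y) (mu x.neg y.neg) := by
  rcases lt_trichotomy x y with h | rfl | h
  · rw [mu_comm x.neg]
    exact ConGen.Rel.of _ _ ⟨x, y, h, rfl, rfl⟩
  · rw [mu_self, mu_self]
    exact (conGen (QRel n)).refl _
  · rw [mu_comm x]
    exact ConGen.Rel.of _ _ ⟨y, x, h, rfl, rfl⟩

theorem conGen_QRel_muSet_union_negSet {X : Set (PM n)} (hX : (X ∩ negSet X).Nonempty) :
    conGen (QRel n) (muSet X) (muSet (X ∪ negSet X)) := by
  obtain ⟨_, hneg, a, ha, rfl⟩ := hX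
  exact con_muSet_union_image conGen_QRel_mu_neg ha hneg X.toFinite subset_rfl

theorem mu_conGen_Q_of_inter_neg_general {X Y : Set (PM n)} (hX : (X ∩ negSet X).Nonempty)
    (hY : (Y ∩ negSet Y).Nonempty) (hXY : PM.abs '' X = PM.abs '' Y) :
    conGen (QRel n) (muSet X) (muSet Y) := by
  have hunion : X ∪ negSet X = Y ∪ negSet Y := by
    rw [← PM.preimage_image_abs, hXY, PM.preimage_image_abs]
  have hX' := conGen_QRel_muSet_union_negSet hX
  rw [hunion] at hX'
  exact (conGen (QRel n)).trans hX'
    ((conGen (QRel n)).symm (conGen_QRel_muSet_union_negSet hY))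

end SignedIntegers

/-- If `X ⊆ [±n]` satisfies `X ∩ (-X) ≠ ∅`, then `(μ_X, μ_Y)` lies in
the congruence generated by `Q`, where `Y = {-m} ∪ |X|` and `m = min |X|`. -/
theorem mu_conGen_Q_of_inter_neg (n : ℕ) (hn : 2 ≤ n) (X : Set (PM n))
    (hX : (X ∩ negSet X).Nonempty) (m : PM n) (hm : IsLeast (PM.abs '' X) m) :
    conGen (QRel n) (muSet X) (muSet ({PM.neg m} ∪ PM.abs '' X)) := by
  have hY : (({PM.neg m} ∪ PM.abs '' X) ∩ negSet ({PM.neg m} ∪ PM.abs '' X)).Nonempty :=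
    ⟨m.neg, .inl rfl, m, .inr hm.1, rfl⟩
  exact mu_conGen_Q_of_inter_neg_general hX hY (PM.image_abs_neg_union_image_abs hm.1).symm
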